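/- Let n ∈ ℕ, let U, V ⊆ ℝⁿ be open subsets, let ν : U → V be any map, and let T : 𝒮(V) → 𝒮(U) be a linear map such that (T f)(x) = f(ν(x)) for every f ∈ 𝒮(V) and every x ∈ U. Then T is continuous with respect to the topologies induced from the Fréchet space of Schwartz functions on ℝⁿ. -/

import Mathlib

/-- The subspace `𝒮(U)` of the Schwartz space of `ℝⁿ`, consisting of those Schwartz
functions all of whose iterated derivatives vanish at every point of `ℝⁿ \ U`. -/
noncomputable def schwartzSubmodule {n : ℕ} (U : Set (EuclideanSpace ℝ (Fin n))) :
    Submodule ℝ (SchwartzMap (EuclideanSpace ℝ (Fin n)) ℝ) where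
  carrier := {f | ∀ z ∉ U, ∀ k : ℕ, iteratedFDeriv ℝ k (⇑f) z = 0}
  zero_mem' := by
    intro z _ k
    have : ⇑(0 : SchwartzMap (EuclideanSpace ℝ (Fin n)) ℝ) =
        (fun _ => (0 : ℝ)) := rfl
    rw [this, iteratedFDeriv_zero_fun]
    rfl
  add_mem' := by
    intro f g hf hg z hz k
    have hfg : ⇑(f + g) = ⇑f + ⇑g := rfl
    rw [hfg, iteratedFDeriv_add_apply (f.smooth k).contDiffAt (g.smooth k).contDiffAt, hf z hz k, hg z hz k,
      add_zero]
  smul_mem' := by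
    intro c f hf z hz k
    have hcf : ⇑(c • f) = c • ⇑f := rfl
    rw [hcf, iteratedFDeriv_const_smul_apply (f.smooth k).contDiffAt, hf z hz k, smul_zero]

open Filter Topology
open scoped SchwartzMap

namespace SchwartzMap

variable {E F : Type*} [NormedAddCommGroup E] [NormedSpace ℝ E]
  [NormedAddCommGroup F] [NormedSpace ℝ F]

/-- Evaluation of the `m`-th iterated derivative of a Schwartz function at a point, as a
continuous linear map. -/
noncomputable def iteratedFDerivAtCLM (m : ℕ) (x : E) : 𝓢(E, F) →L[ℝ] E [×m]→L[ℝ] F :=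
  let L : 𝓢(E, F) →ₗ[ℝ] E [×m]→L[ℝ] F :=
    { toFun := fun f => iteratedFDeriv ℝ m f x
      map_add' := fun f g =>
        iteratedFDeriv_add_apply (f.smooth m).contDiffAt (g.smooth m).contDiffAt
      map_smul' := fun _ f => iteratedFDeriv_const_smul_apply (f.smooth m).contDiffAt }
  { L with
    cont := by
      refine WithSeminorms.continuous_normedSpace_rng _ (schwartz_withSeminorms ℝ E F) L
        ⟨{(0, m)}, 1, fun f => ?_⟩
      simpa using! norm_iteratedFDeriv_le_seminorm ℝ f m x }

@[simp]
theorem iteratedFDerivAtCLM_apply (m : ℕ) (x : E) (f : 𝓢(E, F)) :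
    iteratedFDerivAtCLM m x f = iteratedFDeriv ℝ m f x := rfl

/-- A series of Schwartz functions which converges absolutely for every Schwartz seminorm
converges in the Schwartz space. -/
theorem summable_of_summable_seminorm [CompleteSpace F] {ι : Type*} {f : ι → 𝓢(E, F)}
    (hf : ∀ k m, Summable fun i => SchwartzMap.seminorm ℝ k m (f i)) : Summable f := by
  have hbound : ∀ (m : ℕ) (i : ι) (x : E),
      ‖iteratedFDeriv ℝ m (f i) x‖ ≤ SchwartzMap.seminorm ℝ 0 m (f i) :=
    fun m i x => norm_iteratedFDeriv_le_seminorm ℝ (f i) m x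
  have hderiv : ∀ (m : ℕ) (x : E), iteratedFDeriv ℝ m (fun y => ∑' i, f i y) x =
      ∑' i, iteratedFDeriv ℝ m (f i) x := fun m x =>
    iteratedFDeriv_tsum_apply (N := ⊤) (fun i => (f i).smooth ⊤) (fun m _ => hf 0 m)
      (fun m i x _ => hbound m i x) le_top x
  have hweighted : ∀ (k m : ℕ) (x : E),
      Summable fun i => ‖x‖ ^ k * ‖iteratedFDeriv ℝ m (f i) x‖ := fun k m x =>
    Summable.of_nonneg_of_le (fun i => by positivity)
      (fun i => le_seminorm ℝ k m (f i) x) (hf k m)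
  have hsum : ∀ (m : ℕ) (x : E), Summable fun i => ‖iteratedFDeriv ℝ m (f i) x‖ := by
    intro m x
    simpa using hweighted 0 m x
  let g : 𝓢(E, F) :=
    { toFun := fun y => ∑' i, f i y
      smooth' := contDiff_tsum (N := ⊤) (fun i => (f i).smooth ⊤) (fun m _ => hf 0 m)
        (fun m i x _ => hbound m i x)
      decay' := fun k m => by
        refine ⟨∑' i, SchwartzMap.seminorm ℝ k m (f i), fun x => ?_⟩
        rw [hderiv]
        calc ‖x‖ ^ k * ‖∑' i, iteratedFDeriv ℝ m (f i) x‖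
            ≤ ‖x‖ ^ k * ∑' i, ‖iteratedFDeriv ℝ m (f i) x‖ := by
              gcongr
              exact norm_tsum_le_tsum_norm (hsum m x)
          _ = ∑' i, ‖x‖ ^ k * ‖iteratedFDeriv ℝ m (f i) x‖ := tsum_mul_left.symm
          _ ≤ ∑' i, SchwartzMap.seminorm ℝ k m (f i) :=
              (hweighted k m x).tsum_le_tsum (fun i => le_seminorm ℝ k m (f i) x) (hf k m) }
  refine ⟨g, ?_⟩
  refine ((schwartz_withSeminorms ℝ E F).tendsto_nhds _ g).2 ?_
  rintro ⟨k, m⟩ ε hε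
  have htail := tendsto_tsum_compl_atTop_zero fun i => SchwartzMap.seminorm ℝ k m (f i)
  filter_upwards [htail.eventually_lt_const hε] with s hs
  refine lt_of_le_of_lt ?_ hs
  refine seminorm_le_bound ℝ k m _ (tsum_nonneg fun i => apply_nonneg _ _) fun x => ?_
  have hdiff : iteratedFDeriv ℝ m (⇑(∑ i ∈ s, f i - g)) x =
      -∑' i : {i // i ∉ s}, iteratedFDeriv ℝ m (f i) x := by
    have hsplit := (hsum m x).of_norm.sum_add_tsum_subtype_compl s
    have hg : iteratedFDerivAtCLM m x g = ∑' i, iteratedFDeriv ℝ m (f i) x := hderiv m x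
    rw [← iteratedFDerivAtCLM_apply, map_sub, map_sum, hg, ← hsplit]
    simp
  rw [hdiff, norm_neg]
  calc ‖x‖ ^ k * ‖∑' i : {i // i ∉ s}, iteratedFDeriv ℝ m (f i) x‖
      ≤ ‖x‖ ^ k * ∑' i : {i // i ∉ s}, ‖iteratedFDeriv ℝ m (f i) x‖ := by
        gcongr
        exact norm_tsum_le_tsum_norm ((hsum m x).subtype _)
    _ = ∑' i : {i // i ∉ s}, ‖x‖ ^ k * ‖iteratedFDeriv ℝ m (f i) x‖ := tsum_mul_left.symm
    _ ≤ ∑' i : {i // i ∉ s}, SchwartzMap.seminorm ℝ k m (f i) :=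
        ((hweighted k m x).subtype _).tsum_le_tsum
          (fun i => le_seminorm ℝ k m (f i) x) ((hf k m).subtype _)

instance instIsCountablyGeneratedUniformity : (uniformity 𝓢(E, F)).IsCountablyGenerated :=
  IsUniformAddGroup.uniformity_countably_generated

instance instCompleteSpace [CompleteSpace F] : CompleteSpace 𝓢(E, F) := by
  let p : ℕ → Seminorm ℝ 𝓢(E, F) := fun N =>
    (Finset.Iic (N, N)).sup (schwartzSeminormFamily ℝ E F)
  refine UniformSpace.complete_of_convergent_controlled_sequences
    (fun N => {fg | p N (fg.2 - fg.1) < (1 / 2 : ℝ) ^ N}) (fun N => ?_) fun u hu => ?_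
  · rw [uniformity_eq_comap_nhds_zero]
    refine ⟨(p N).ball 0 ((1 / 2 : ℝ) ^ N), ?_, fun fg hfg => ?_⟩
    · exact ((schwartz_withSeminorms ℝ E F).mem_nhds_iff _ _).2
        ⟨_, _, by positivity, subset_rfl⟩
    · simpa [Seminorm.mem_ball] using hfg
  · have hsum : Summable fun j => u (j + 1) - u j := by
      refine summable_of_summable_seminorm fun k m => ?_
      refine Summable.of_norm_bounded_eventually_nat
        (summable_geometric_of_lt_one (by norm_num) (by norm_num : (1 / 2 : ℝ) < 1)) ?_
      filter_upwards [eventually_ge_atTop (max k m)] with j hj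
      rw [Real.norm_of_nonneg (apply_nonneg _ _)]
      have hle : schwartzSeminormFamily ℝ E F (k, m) ≤ p j :=
        Finset.le_sup (f := schwartzSeminormFamily ℝ E F) (Finset.mem_Iic.2
          ⟨(le_max_left k m).trans hj, (le_max_right k m).trans hj⟩)
      exact (hle _).trans (hu j j (j + 1) le_rfl (Nat.le_succ j)).le
    refine ⟨(∑' j, (u (j + 1) - u j)) + u 0, ?_⟩
    have h := hsum.hasSum.tendsto_sum_nat.add_const (u 0)
    simpa only [Finset.sum_range_sub, sub_add_cancel] using h

end SchwartzMap

section

variable {n : ℕ}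

theorem isClosed_schwartzSubmodule (V : Set (EuclideanSpace ℝ (Fin n))) :
    IsClosed (schwartzSubmodule V : Set 𝓢(EuclideanSpace ℝ (Fin n), ℝ)) := by
  have : (schwartzSubmodule V : Set 𝓢(EuclideanSpace ℝ (Fin n), ℝ)) =
      ⋂ z ∈ Vᶜ, ⋂ k : ℕ, {f | SchwartzMap.iteratedFDerivAtCLM k z f = 0} := by
    ext f
    simp [schwartzSubmodule]
  rw [this]
  exact isClosed_biInter fun z _ => isClosed_iInter fun k =>
    isClosed_eq (SchwartzMap.iteratedFDerivAtCLM k z).continuous continuous_const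

instance instIsUniformAddGroupSchwartzSubmodule (V : Set (EuclideanSpace ℝ (Fin n))) :
    IsUniformAddGroup (schwartzSubmodule V) :=
  inferInstanceAs (IsUniformAddGroup (schwartzSubmodule V).toAddSubgroup)

instance instBarrelledSpaceSchwartzSubmodule (V : Set (EuclideanSpace ℝ (Fin n))) :
    BarrelledSpace ℝ (schwartzSubmodule V) := by
  have : CompleteSpace (schwartzSubmodule V) :=
    (isClosed_schwartzSubmodule V).completeSpace_coe
  have : (uniformity (schwartzSubmodule V)).IsCountablyGenerated :=
    Filter.comap.isCountablyGenerated _ _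
  infer_instance

end

section

variable {X E F : Type*} [AddCommGroup X] [Module ℝ X] [UniformSpace X] [IsUniformAddGroup X]
  [ContinuousSMul ℝ X] [BarrelledSpace ℝ X]
  [NormedAddCommGroup E] [NormedSpace ℝ E] [NormedAddCommGroup F] [NormedSpace ℝ F]

/-- If a linear map from a barrelled space into the Schwartz space is continuous for pointwise
convergence, then so are all iterated derivatives of its values. -/
theorem continuous_iteratedFDeriv_apply_of_continuous_eval (S : X →ₗ[ℝ] 𝓢(E, F))
    (hS : ∀ x, Continuous fun f => S f x) (m : ℕ) (x : E) (v : Fin m → E) :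
    Continuous fun f => iteratedFDeriv ℝ m (S f) x v := by
  induction m generalizing x with
  | zero => simpa using hS x
  | succ m ih =>
    let D : E → X →L[ℝ] F := fun y =>
      { toFun := fun f => SchwartzMap.iteratedFDerivAtCLM m y (S f) (Fin.tail v)
        map_add' := fun f g => by simp only [map_add, add_apply]
        map_smul' := fun c f => by
          simp only [map_smul, smul_apply, RingHom.id_apply]
        cont := ih y (Fin.tail v) }
    have hlim : Tendsto (fun (t : ℝ) f => (t⁻¹ • (D (x + t • v 0) - D x)) f) (𝓝[≠] 0)
        (𝓝 fun f => iteratedFDeriv ℝ (m + 1) (S f) x v) := by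
      refine tendsto_pi_nhds.2 fun f => ?_
      have hdiff : Differentiable ℝ (iteratedFDeriv ℝ m (S f)) :=
        ((S f).smooth ⊤).differentiable_iteratedFDeriv (by exact_mod_cast ENat.natCast_lt_top m)
      have hline : HasLineDerivAt ℝ (fun y => iteratedFDeriv ℝ m (S f) y (Fin.tail v))
          (iteratedFDeriv ℝ (m + 1) (S f) x v) x (v 0) := by
        rw [(hdiff x).iteratedFDeriv_succ_apply_left']
        exact ((hdiff x).continuousMultilinear_apply_const _).hasFDerivAt.hasLineDerivAt _
      exact hline.tendsto_slope_zero
    exact (continuousLinearMapOfTendsto _ hlim).continuous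

/-- A linear map from a barrelled space into the Schwartz space which is continuous for pointwise
convergence is continuous. -/
theorem continuous_of_continuous_eval (S : X →ₗ[ℝ] 𝓢(E, F))
    (hS : ∀ x, Continuous fun f => S f x) : Continuous S := by
  refine (schwartz_withSeminorms ℝ E F).continuous_of_continuous_comp S ?_
  rintro ⟨k, m⟩
  refine Seminorm.continuous_of_lowerSemicontinuous _ ?_
  rw [lowerSemicontinuous_iff_isClosed_preimage]
  intro c
  rcases lt_or_ge c 0 with hc | hc
  · convert! isClosed_empty
    ext f
    simpa using hc.trans_le (apply_nonneg (SchwartzMap.seminorm ℝ k m) (S f))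
  have hset : ⇑((schwartzSeminormFamily ℝ E F (k, m)).comp S) ⁻¹' Set.Iic c =
      ⋂ (x : E) (v : Fin m → E),
        {f | ‖x‖ ^ k * ‖iteratedFDeriv ℝ m (S f) x v‖ ≤ c * ∏ i, ‖v i‖} := by
    ext f
    simp only [Set.mem_preimage, Set.mem_Iic, Set.mem_iInter, Set.mem_ofPred_eq,
      Seminorm.comp_apply, SchwartzMap.schwartzSeminormFamily_apply]
    constructor
    · intro h x v
      calc ‖x‖ ^ k * ‖iteratedFDeriv ℝ m (S f) x v‖
          ≤ ‖x‖ ^ k * (‖iteratedFDeriv ℝ m (S f) x‖ * ∏ i, ‖v i‖) := by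
            gcongr
            exact ContinuousMultilinearMap.le_opNorm _ _
        _ = (‖x‖ ^ k * ‖iteratedFDeriv ℝ m (S f) x‖) * ∏ i, ‖v i‖ := (mul_assoc _ _ _).symm
        _ ≤ c * ∏ i, ‖v i‖ := by
            gcongr
            exact (SchwartzMap.le_seminorm ℝ k m (S f) x).trans h
    · intro h
      refine SchwartzMap.seminorm_le_bound ℝ k m _ hc fun x => ?_
      have hnorm : ‖(‖x‖ ^ k) • iteratedFDeriv ℝ m (S f) x‖ ≤ c :=
        ContinuousMultilinearMap.opNorm_le_bound hc fun v => by
          simpa [norm_smul] using h x v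
      simpa [norm_smul] using hnorm
  rw [hset]
  exact isClosed_iInter fun x => isClosed_iInter fun v => isClosed_le
    (continuous_const.mul (continuous_iteratedFDeriv_apply_of_continuous_eval S hS m x v).norm)
    continuous_const

end

/-- Let `U, V ⊆ ℝⁿ` be open, `ν : U → V` any map, and
`T : 𝒮(V) → 𝒮(U)` a linear map acting by `(T f)(x) = f(ν x)` for `x ∈ U`.
Then `T` is continuous for the topologies induced from the Schwartz space of `ℝⁿ`. -/
theorem stmt_7 (n : ℕ) (U V : Set (EuclideanSpace ℝ (Fin n))) (hU : IsOpen U)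
    (hV : IsOpen V) (ν : EuclideanSpace ℝ (Fin n) → EuclideanSpace ℝ (Fin n))
    (hν : Set.MapsTo ν U V)
    (T : schwartzSubmodule V →ₗ[ℝ] schwartzSubmodule U)
    (hT : ∀ (f : schwartzSubmodule V) (x : EuclideanSpace ℝ (Fin n)), x ∈ U →
      ((T f : SchwartzMap (EuclideanSpace ℝ (Fin n)) ℝ)) x
        = (f : SchwartzMap (EuclideanSpace ℝ (Fin n)) ℝ) (ν x)) :
    Continuous T := by
  refine Continuous.subtype_mk (continuous_of_continuous_eval
    ((schwartzSubmodule U).subtype ∘ₗ T) fun x => ?_) _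
  by_cases hx : x ∈ U
  · simp only [LinearMap.comp_apply, Submodule.subtype_apply, hT _ x hx]
    exact ((SchwartzMap.toBoundedContinuousFunctionCLM ℝ _ _).continuous.comp
      continuous_subtype_val).eval_const (ν x)
  · have hzero : ∀ f, (T f : 𝓢(EuclideanSpace ℝ (Fin n), ℝ)) x = 0 := fun f => by
      rw [← norm_eq_zero, ← norm_iteratedFDeriv_zero (𝕜 := ℝ), (T f).2 x hx 0, norm_zero]
    simpa only [LinearMap.comp_apply, Submodule.subtype_apply, hzero] using continuous_const
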